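/- Let μ be any σ-invariant Borel probability measure on X. For every k ∈ ℕ, 1 / h (k+1) < μ(S k) < b / h (k+1), where S k = { x ∈ X : the block x_{−h k} … x_{h k} equals the word B k ++ [1] ++ B k }. -/

import Mathlib

open MeasureTheory Filter Topology
open scoped ENNReal

/-- `m`-fold concatenation of a word. -/
def wordPow (w : List ℕ) (m : ℕ) : List ℕ := (List.replicate m w).flatten

/-- The words of the generalized del Junco–Rudolph construction:
`B 0 = [0]`, `B (k+1) = (B k)^(a·b^k) ++ [1] ++ (B k)^((b-a)·b^k)`. -/
def Bword (b a : ℕ) : ℕ → List ℕ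
  | 0 => [0]
  | k + 1 => wordPow (Bword b a k) (a * b ^ k) ++ [1] ++ wordPow (Bword b a k) ((b - a) * b ^ k)

/-- The height sequence: `h 0 = 1`, `h (k+1) = b^(k+1) * h k + 1`. -/
def hseq (b : ℕ) : ℕ → ℕ
  | 0 => 1
  | k + 1 => b ^ (k + 1) * hseq b k + 1

/-- The word `w` occurs in the word `v` at position `p` (0-based). -/
def OccursAt (w v : List ℕ) (p : ℕ) : Prop :=
  p + w.length ≤ v.length ∧ (v.drop p).take w.length = w

/-- The block of `x` of length `w.length` starting at index `m` equals the word `w`. -/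
def BlockEq (x : ℤ → ℕ) (m : ℤ) (w : List ℕ) : Prop :=
  ∀ i : ℕ, i < w.length → x (m + i) = w.getD i 0

/-- Membership in the subshift `X`: every finite block of `x` occurs as a consecutive
subword of some `B k`. -/
def InX (b a : ℕ) (x : ℤ → ℕ) : Prop :=
  ∀ (m : ℤ) (l : ℕ), ∃ k p, OccursAt (List.ofFn fun i : Fin l => x (m + (i : ℕ))) (Bword b a k) p

/-- The left shift `(σ x) n = x (n+1)` on `{0,1}^ℤ`. -/
def shiftMap (x : ℤ → ℕ) : ℤ → ℕ := fun n => x (n + 1)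

/-- The set `S k = {x ∈ X : x_{-h k} … x_{h k} = B k 1 B k}`. -/
def Sset (b a k : ℕ) : Set (ℤ → ℕ) :=
  {x | InX b a x ∧ BlockEq x (-(hseq b k : ℤ)) (Bword b a k ++ [1] ++ Bword b a k)}

/-!
Label each spacer of `B n` by the stage at which it was inserted. A spacer of stage `j` owns a
whole copy of `B j`, so two spacers of stage greater than `k` are more than `b^k h k` apart, and
they are centers of occurrences of `B k 1 B k`. There are no other occurrences. Inductively, the
center of an occurrence of `B (k+1) 1 B (k+1)` has stage greater than `k`, and so have the central
spacers of the two copies of `B (k+1)`. If the former had stage `k+1`, it would be too close to the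
latter for them to have stage `k+1` too, so these would have a later stage while being only
`h (k+1) + 1` apart.

Hence the visits of an orbit in `X` to `S k` are more than `b^k h k` apart, and there is one in
every time interval of length `h (k+1)`. By invariance `(b^k h k + 1) μ(S k) ≤ 1`, which suffices
because `h (k+1) = b^(k+1) h k + 1 < b (b^k h k + 1)`, and `1 ≤ h (k+1) μ(S k)`. The latter is
strict because a point of the non-null set `S (k+1)` visits `S k` twice in such an interval.
-/

section ReturnTimes

variable {α : Type*} {_ : MeasurableSpace α} {μ : Measure α} {f : α → α} {E : Set α}

lemma measure_ne_zero_of_ae_exists_iterate_mem [NeZero μ]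
    (hf : Measure.QuasiMeasurePreserving f μ μ) (hE : ∀ᵐ x ∂μ, ∃ n, f^[n] x ∈ E) : μ E ≠ 0 := by
  intro h
  have havoid : ∀ᵐ x ∂μ, ∀ n, f^[n] x ∉ E :=
    ae_all_iff.2 fun n ↦ (hf.iterate n).ae (measure_eq_zero_iff_ae_notMem.1 h)
  obtain ⟨x, ⟨n, hn⟩, hx⟩ := (hE.and havoid).exists
  exact hx n hn

lemma measure_univ_lt_mul_measure_of_ae_exists_iterate_mem [IsFiniteMeasure μ]
    (hf : MeasurePreserving f μ μ) (hE : NullMeasurableSet E μ) {N d : ℕ}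
    (hvisit : ∀ᵐ x ∂μ, ∃ n < N, f^[n] x ∈ E) (hd : 0 < d) (hdN : d < N)
    (htwice : μ (E ∩ f^[d] ⁻¹' E) ≠ 0) : μ Set.univ < N * μ E := by
  have hpre (n : ℕ) : μ (f^[n] ⁻¹' E) = μ E := (hf.iterate n).measure_preimage hE
  have hcover : (Set.univ : Set α) ≤ᵐ[μ]
      ((⋃ n ∈ (Finset.range N).erase d, f^[n] ⁻¹' E) ∪ (f^[d] ⁻¹' E \ E) : Set α) := by
    filter_upwards [hvisit] with x ⟨n, hn, hx⟩ _
    by_cases hxE : x ∈ E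
    · exact .inl (Set.mem_biUnion (x := 0) (by simp; omega) hxE)
    · rcases eq_or_ne n d with rfl | hnd
      · exact .inr ⟨hx, hxE⟩
      · exact .inl (Set.mem_biUnion (x := n) (by simp [hn, hnd]) hx)
  have hnew : μ (f^[d] ⁻¹' E \ E) < μ E := by
    rw [← hpre d, ← measure_inter_add_sdiff₀ (f^[d] ⁻¹' E) hE, Set.inter_comm, add_comm]
    exact ENNReal.lt_add_right (measure_ne_top _ _) htwice
  calc μ Set.univ
      ≤ ∑ n ∈ (Finset.range N).erase d, μ (f^[n] ⁻¹' E) + μ (f^[d] ⁻¹' E \ E) :=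
        (measure_mono_ae hcover).trans <| (measure_union_le _ _).trans <|
          add_le_add_left (measure_biUnion_finset_le _ _) _
    _ < ∑ n ∈ (Finset.range N).erase d, μ (f^[n] ⁻¹' E) + μ (f^[d] ⁻¹' E) :=
        ENNReal.add_lt_add_left (ENNReal.sum_ne_top.2 fun _ _ ↦ measure_ne_top _ _)
          (hnew.trans_eq (hpre d).symm)
    _ = N * μ E := by
        rw [Finset.sum_erase_add _ _ (Finset.mem_range.2 hdN)]
        simp [hpre]

lemma mul_measure_le_of_forall_iterate_mem_le (hf : MeasurePreserving f μ μ)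
    (hE : NullMeasurableSet E μ) {N : ℕ}
    (hreturn : ∀ x ∈ E, ∀ m, 0 < m → f^[m] x ∈ E → N ≤ m) : N * μ E ≤ μ Set.univ := by
  by_contra! h
  obtain ⟨x, hx, m, hm, hxm⟩ := hf.exists_mem_iterate_mem_of_measure_univ_lt_mul_measure hE h
  exact (hreturn x hx m hm.1 hxm).not_gt hm.2

end ReturnTimes

section Words

variable {u v w : List ℕ} {p q m : ℕ}

lemma wordPow_succ (w : List ℕ) (m : ℕ) : wordPow w (m + 1) = w ++ wordPow w m := by
  simp only [wordPow, List.replicate_succ, List.flatten_cons]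

lemma length_wordPow (w : List ℕ) (m : ℕ) : (wordPow w m).length = m * w.length := by
  simp [wordPow]

lemma map_wordPow (f : ℕ → ℕ) (w : List ℕ) (m : ℕ) :
    (wordPow w m).map f = wordPow (w.map f) m := by
  simp [wordPow, List.map_flatten]

lemma mem_of_mem_wordPow {c : ℕ} (h : c ∈ wordPow w m) : c ∈ w := by
  obtain ⟨_, hl, hc⟩ := List.mem_flatten.1 h
  rwa [List.eq_of_mem_replicate hl] at hc

lemma prefix_wordPow (w : List ℕ) (hm : 0 < m) : w <+: wordPow w m := by
  obtain ⟨m, rfl⟩ := Nat.exists_eq_add_one.2 hm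
  exact ⟨wordPow w m, (wordPow_succ w m).symm⟩

lemma suffix_wordPow (w : List ℕ) (hm : 0 < m) : w <:+ wordPow w m := by
  obtain ⟨m, rfl⟩ := Nat.exists_eq_add_one.2 hm
  exact ⟨wordPow w m, by simp [wordPow, List.replicate_succ']⟩

lemma wordPow_induction {P : List ℕ → Prop} (happend : ∀ v w, P v → P w → P (v ++ w))
    (hw : P w) (hm : 0 < m) : P (wordPow w m) := by
  induction m, hm using Nat.le_induction with
  | base => simpa [wordPow] using hw
  | succ m _ ih => exact wordPow_succ w m ▸ happend _ _ hw ih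

lemma occursAt_iff_getElem? :
    OccursAt w v p ↔ p + w.length ≤ v.length ∧ ∀ i < w.length, v[p + i]? = w[i]? := by
  refine and_congr_right fun _ ↦ ⟨fun h i hi ↦ ?_, fun h ↦ List.ext_getElem? fun i ↦ ?_⟩
  · rw [← h, List.getElem?_take_of_lt hi, List.getElem?_drop]
  · rcases lt_or_ge i w.length with hi | hi
    · rw [List.getElem?_take_of_lt hi, List.getElem?_drop, h i hi]
    · rw [List.getElem?_eq_none hi, List.getElem?_take_eq_none hi]

lemma occursAt_append (u w v : List ℕ) : OccursAt w (u ++ w ++ v) u.length := by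
  simp [OccursAt]

lemma OccursAt.trans (huv : OccursAt u v p) (hvw : OccursAt v w q) : OccursAt u w (q + p) := by
  rw [occursAt_iff_getElem?] at *
  refine ⟨by omega, fun i hi ↦ ?_⟩
  rw [add_assoc, hvw.2 (p + i) (by omega), huv.2 i hi]

lemma occursAt_of_isPrefix (h : w <+: v) : OccursAt w v 0 := by
  obtain ⟨t, rfl⟩ := h
  exact occursAt_append [] w t

lemma occursAt_of_isSuffix (h : w <:+ v) : OccursAt w v (v.length - w.length) := by
  obtain ⟨s, rfl⟩ := h
  simpa using occursAt_append s w []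

lemma BlockEq.of_occursAt {x : ℤ → ℕ} {m : ℤ} (hv : BlockEq x m v) (hw : OccursAt w v p) :
    BlockEq x (m + p) w := by
  obtain ⟨hlen, hletter⟩ := occursAt_iff_getElem?.1 hw
  intro i hi
  have := hv (p + i) (by omega)
  rw [List.getD_eq_getElem?_getD, hletter i hi, ← List.getD_eq_getElem?_getD] at this
  rw [← this, Nat.cast_add, add_assoc]

end Words

section Heights

variable {b a : ℕ}

lemma hseq_pos (b k : ℕ) : 0 < hseq b k := by
  cases k <;> simp [hseq]

lemma hseq_strictMono (hb : 0 < b) : StrictMono (hseq b) :=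
  strictMono_nat_of_lt_succ fun _ ↦ Nat.lt_succ_of_le (Nat.le_mul_of_pos_left _ (Nat.pow_pos hb))

/-- The length of the part of `B (k+1)` to the left of the spacer inserted at stage `k+1`. -/
def leftLength (b a k : ℕ) : ℕ := a * b ^ k * hseq b k

/-- The length of the part of `B (k+1)` to the right of the spacer inserted at stage `k+1`. -/
def rightLength (b a k : ℕ) : ℕ := (b - a) * b ^ k * hseq b k

lemma hseq_succ_eq (hab : a ≤ b) (k : ℕ) :
    hseq b (k + 1) = leftLength b a k + 1 + rightLength b a k := by
  obtain ⟨d, rfl⟩ := Nat.exists_eq_add_of_le hab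
  simp only [hseq, leftLength, rightLength, Nat.add_sub_cancel_left]
  ring

lemma pow_mul_hseq_pos (hb : 0 < b) (k : ℕ) : 0 < b ^ k * hseq b k :=
  Nat.mul_pos (Nat.pow_pos hb) (hseq_pos b k)

lemma pow_mul_hseq_mono (hb : 0 < b) : Monotone fun k ↦ b ^ k * hseq b k :=
  fun _ _ h ↦ Nat.mul_le_mul (Nat.pow_le_pow_right hb h) ((hseq_strictMono hb).monotone h)

lemma pow_mul_hseq_le_leftLength (ha : 0 < a) (b k : ℕ) :
    b ^ k * hseq b k ≤ leftLength b a k := by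
  rw [leftLength, mul_assoc]
  exact Nat.le_mul_of_pos_left _ ha

lemma pow_mul_hseq_le_rightLength (hab : a < b) (k : ℕ) :
    b ^ k * hseq b k ≤ rightLength b a k := by
  rw [rightLength, mul_assoc]
  exact Nat.le_mul_of_pos_left _ (Nat.sub_pos_of_lt hab)

lemma leftLength_pos (ha : 0 < a) (hb : 0 < b) (k : ℕ) : 0 < leftLength b a k :=
  (pow_mul_hseq_pos hb k).trans_le (pow_mul_hseq_le_leftLength ha b k)

lemma rightLength_pos (hab : a < b) (k : ℕ) : 0 < rightLength b a k :=
  (pow_mul_hseq_pos (Nat.zero_lt_of_lt hab) k).trans_le (pow_mul_hseq_le_rightLength hab k)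

end Heights

/-- The word `B n` in which every spacer is replaced by the stage `k ≥ 1` at which it was
inserted, so that the spacers of different stages can be told apart. -/
def markedWord (b a : ℕ) : ℕ → List ℕ
  | 0 => [0]
  | k + 1 => wordPow (markedWord b a k) (a * b ^ k) ++ [k + 1] ++
      wordPow (markedWord b a k) ((b - a) * b ^ k)

/-- The least number of positions strictly between a letter `c` and a later letter `d`, when each
letter `c` at position `i` owns the territory `[i - L c, i + R c]`: territories of equal letters
are disjoint, and a larger letter lies outside the territory of a smaller one. -/
def clearance (L R : ℕ → ℕ) (c d : ℕ) : ℕ :=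
  (if c ≤ d then R c else 0) + if d ≤ c then L d else 0

/-- The territories `[i - L c, i + R c]` of the letters `c` of `w` lie inside `w` and keep the
distances prescribed by `clearance`. -/
structure Spaced (L R : ℕ → ℕ) (w : List ℕ) : Prop where
  left_le : ∀ {i c}, w[i]? = some c → L c ≤ i
  right_lt : ∀ {i c}, w[i]? = some c → i + R c < w.length
  clearance_lt : ∀ {i j c d}, i < j → w[i]? = some c → w[j]? = some d →
    i + clearance L R c d < j

section Spacing

variable {L R : ℕ → ℕ} {v w : List ℕ} {i c d : ℕ}

lemma clearance_le (L R : ℕ → ℕ) (c d : ℕ) : clearance L R c d ≤ R c + L d := by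
  unfold clearance
  split_ifs <;> omega

lemma clearance_self (L R : ℕ → ℕ) (c : ℕ) : clearance L R c c = R c + L c := by
  simp [clearance]

lemma clearance_of_lt (h : c < d) : clearance L R c d = R c := by
  simp [clearance, h.le, h]

lemma clearance_of_gt (h : d < c) : clearance L R c d = L d := by
  simp [clearance, h.le, h]

lemma getElem?_append_eq_some_iff :
    (v ++ w)[i]? = some c ↔ v[i]? = some c ∨ ∃ i', i = v.length + i' ∧ w[i']? = some c := by
  rcases lt_or_ge i v.length with h | h
  · rw [List.getElem?_append_left h]
    exact ⟨.inl, fun h' ↦ h'.resolve_right (by rintro ⟨i', rfl, -⟩; omega)⟩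
  · obtain ⟨i', rfl⟩ := Nat.exists_eq_add_of_le h
    simp [List.getElem?_append_right]

lemma spaced_singleton (hL : L c = 0) (hR : R c = 0) : Spaced L R [c] where
  left_le h := by simp_all [List.getElem?_singleton]
  right_lt h := by simp_all [List.getElem?_singleton]
  clearance_lt hij h h' := by simp_all [List.getElem?_singleton]

lemma Spaced.append (hv : Spaced L R v) (hw : Spaced L R w) : Spaced L R (v ++ w) where
  left_le {i c} h := by
    rcases getElem?_append_eq_some_iff.1 h with hi | ⟨i, rfl, hi⟩
    · exact hv.left_le hi
    · exact (hw.left_le hi).trans (Nat.le_add_left _ _)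
  right_lt {i c} h := by
    rw [List.length_append]
    rcases getElem?_append_eq_some_iff.1 h with hi | ⟨i, rfl, hi⟩
    · exact (hv.right_lt hi).trans_le (Nat.le_add_right _ _)
    · exact Nat.add_assoc .. ▸ Nat.add_lt_add_left (hw.right_lt hi) _
  clearance_lt {i j c d} hij h h' := by
    rcases getElem?_append_eq_some_iff.1 h with hi | ⟨i, rfl, hi⟩ <;>
      rcases getElem?_append_eq_some_iff.1 h' with hj | ⟨j, rfl, hj⟩
    · exact hv.clearance_lt hij hi hj
    · have := hv.right_lt hi
      have := hw.left_le hj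
      have := clearance_le L R c d
      omega
    · have := hv.right_lt hj
      omega
    · have := hw.clearance_lt (by omega) hi hj
      omega

lemma getElem?_append_singleton_append_eq_some_iff :
    (v ++ [c] ++ w)[i]? = some d ↔
      v[i]? = some d ∨ (i = v.length ∧ d = c) ∨ ∃ i', i = v.length + 1 + i' ∧ w[i']? = some d := by
  simp only [getElem?_append_eq_some_iff, List.getElem?_singleton, List.length_append,
    List.length_singleton, or_assoc, Option.ite_none_right_eq_some, Option.some.injEq]
  grind

lemma Spaced.append_singleton_append (hv : Spaced L R v) (hw : Spaced L R w)
    (hvc : ∀ d ∈ v, d < c) (hwc : ∀ d ∈ w, d < c) (hL : L c = v.length) (hR : R c = w.length) :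
    Spaced L R (v ++ [c] ++ w) where
  left_le {i d} h := by
    rcases getElem?_append_singleton_append_eq_some_iff.1 h with
      hi | ⟨rfl, rfl⟩ | ⟨i, rfl, hi⟩
    · exact hv.left_le hi
    · exact hL.le
    · exact (hw.left_le hi).trans (Nat.le_add_left _ _)
  right_lt {i d} h := by
    simp only [List.length_append, List.length_singleton]
    rcases getElem?_append_singleton_append_eq_some_iff.1 h with
      hi | ⟨rfl, rfl⟩ | ⟨i, rfl, hi⟩
    · have := hv.right_lt hi; omega
    · omega
    · have := hw.right_lt hi; omega
  clearance_lt {i j d e} hij h h' := by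
    rcases getElem?_append_singleton_append_eq_some_iff.1 h with
        hi | ⟨rfl, rfl⟩ | ⟨i, rfl, hi⟩ <;>
      rcases getElem?_append_singleton_append_eq_some_iff.1 h' with
        hj | ⟨rfl, rfl⟩ | ⟨j, rfl, hj⟩
    · exact hv.clearance_lt hij hi hj
    · rw [clearance_of_lt (hvc _ (List.mem_of_getElem? hi))]
      exact hv.right_lt hi
    · have := hv.right_lt hi
      have := hw.left_le hj
      have := clearance_le L R d e
      omega
    · have := hv.right_lt hj; omega
    · omega
    · rw [clearance_of_gt (hwc _ (List.mem_of_getElem? hj))]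
      have := hw.left_le hj
      omega
    · have := hv.right_lt hj; omega
    · omega
    · have := hw.clearance_lt (by omega) hi hj; omega

end Spacing

section Marks

variable {b a : ℕ}

/-- The part of the territory of a letter `c` of a marked word to its left: the letter `c ≥ 1`
owns the copy of `B c` whose central spacer it marks. -/
def leftMargin (b a : ℕ) : ℕ → ℕ
  | 0 => 0
  | k + 1 => leftLength b a k

/-- The part of the territory of a letter `c` of a marked word to its right. -/
def rightMargin (b a : ℕ) : ℕ → ℕ
  | 0 => 0
  | k + 1 => rightLength b a k

lemma length_markedWord (hab : a ≤ b) (n : ℕ) : (markedWord b a n).length = hseq b n := by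
  induction n with
  | zero => rfl
  | succ n ih =>
    simp only [markedWord, List.length_append, length_wordPow, ih, List.length_singleton,
      hseq_succ_eq hab, leftLength, rightLength]

lemma Bword_eq_map_markedWord (b a n : ℕ) : Bword b a n = (markedWord b a n).map (min 1) := by
  induction n with
  | zero => rfl
  | succ n ih => simp [Bword, markedWord, map_wordPow, ih]

lemma length_Bword (hab : a ≤ b) (n : ℕ) : (Bword b a n).length = hseq b n := by
  rw [Bword_eq_map_markedWord, List.length_map, length_markedWord hab]

lemma le_of_mem_markedWord {n c : ℕ} (h : c ∈ markedWord b a n) : c ≤ n := by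
  induction n with
  | zero => simp_all [markedWord]
  | succ n ih =>
    simp only [markedWord, List.mem_append, List.mem_singleton] at h
    rcases h with (h | rfl) | h
    · exact (ih (mem_of_mem_wordPow h)).trans n.le_succ
    · exact le_rfl
    · exact (ih (mem_of_mem_wordPow h)).trans n.le_succ

lemma spaced_markedWord (ha : 0 < a) (hab : a < b) (n : ℕ) :
    Spaced (leftMargin b a) (rightMargin b a) (markedWord b a n) := by
  induction n with
  | zero => exact spaced_singleton rfl rfl
  | succ n ih =>
    have hpow : 0 < b ^ n := Nat.pow_pos (ha.trans hab)
    have hspaced {m : ℕ} (hm : 0 < m) := wordPow_induction (fun _ _ ↦ Spaced.append) ih hm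
    have hlt {m c : ℕ} (hc : c ∈ wordPow (markedWord b a n) m) : c < n + 1 :=
      Nat.lt_succ_of_le (le_of_mem_markedWord (mem_of_mem_wordPow hc))
    have hlength (m : ℕ) : (wordPow (markedWord b a n) m).length = m * hseq b n := by
      rw [length_wordPow, length_markedWord hab.le]
    exact (hspaced (Nat.mul_pos ha hpow)).append_singleton_append
      (hspaced (Nat.mul_pos (Nat.sub_pos_of_lt hab) hpow)) (fun _ ↦ hlt) (fun _ ↦ hlt)
      (hlength _).symm (hlength _).symm

lemma pow_mul_hseq_le_margins (ha : 0 < a) (hab : a < b) {k c : ℕ} (hkc : k < c) :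
    b ^ k * hseq b k ≤ leftMargin b a c ∧ b ^ k * hseq b k ≤ rightMargin b a c := by
  obtain ⟨c, rfl⟩ := Nat.exists_eq_add_one_of_ne_zero (Nat.ne_zero_of_lt hkc)
  have hmono := pow_mul_hseq_mono (ha.trans hab) (Nat.le_of_lt_succ hkc)
  exact ⟨hmono.trans (pow_mul_hseq_le_leftLength ha b c),
    hmono.trans (pow_mul_hseq_le_rightLength hab c)⟩

lemma add_pow_mul_hseq_lt_of_marks (ha : 0 < a) (hab : a < b) {n k i j c d : ℕ} (hij : i < j)
    (hi : (markedWord b a n)[i]? = some c) (hj : (markedWord b a n)[j]? = some d)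
    (hc : k < c) (hd : k < d) : i + b ^ k * hseq b k < j := by
  refine lt_of_le_of_lt (Nat.add_le_add_left ?_ i)
    ((spaced_markedWord ha hab n).clearance_lt hij hi hj)
  have hRc := (pow_mul_hseq_le_margins ha hab hc).2
  have hLd := (pow_mul_hseq_le_margins ha hab hd).1
  rcases le_total c d with h | h
  · exact hRc.trans (by simp [clearance, h])
  · exact hLd.trans (by simp [clearance, h])

lemma add_hseq_le_of_marks_eq (ha : 0 < a) (hab : a < b) {n k i j : ℕ} (hij : i < j)
    (hi : (markedWord b a n)[i]? = some (k + 1)) (hj : (markedWord b a n)[j]? = some (k + 1)) :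
    i + hseq b (k + 1) ≤ j := by
  have := (spaced_markedWord ha hab n).clearance_lt hij hi hj
  rw [clearance_self, leftMargin, rightMargin] at this
  rw [hseq_succ_eq hab.le]
  omega

lemma succ_lt_mark_of_marks (ha : 0 < a) (hab : a < b) {n k p c d e : ℕ}
    (hc : (markedWord b a n)[p + leftLength b a k]? = some c)
    (hd : (markedWord b a n)[p + hseq b (k + 1)]? = some d)
    (he : (markedWord b a n)[p + (hseq b (k + 1) + 1 + leftLength b a k)]? = some e)
    (hkc : k < c) (hkd : k < d) (hke : k < e) : k + 1 < d := by
  have hleft := leftLength_pos ha (ha.trans hab) k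
  have hright := rightLength_pos hab k
  have hheight := hseq_succ_eq hab.le k
  refine (Nat.succ_le_of_lt hkd).lt_of_ne' ?_
  rintro rfl
  have hc_ne : c ≠ k + 1 := by
    rintro rfl
    have := add_hseq_le_of_marks_eq ha hab (by omega) hc hd
    omega
  have he_ne : e ≠ k + 1 := by
    rintro rfl
    have := add_hseq_le_of_marks_eq ha hab (by omega) hd he
    omega
  have hgap := add_pow_mul_hseq_lt_of_marks (k := k + 1) ha hab (by omega) hc he
    (by omega) (by omega)
  have hpow : 2 ≤ b ^ (k + 1) :=
    (Nat.succ_le_of_lt (Nat.lt_of_le_of_lt ha hab)).trans (Nat.le_self_pow (Nat.succ_ne_zero k) b)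
  have := Nat.mul_le_mul_right (hseq b (k + 1)) hpow
  omega

end Marks

section Centers

variable {b a : ℕ}

/-- The word `B k 1 B k` cut out by the set `S k`. -/
def centerWord (b a k : ℕ) : List ℕ := Bword b a k ++ [1] ++ Bword b a k

/-- The letter of `w` at position `i` is the middle of an occurrence of `B k 1 B k`. -/
def CenteredAt (b a k : ℕ) (w : List ℕ) (i : ℕ) : Prop :=
  ∃ p, p + hseq b k = i ∧ OccursAt (centerWord b a k) w p

variable {k p i : ℕ} {v w : List ℕ}

lemma CenteredAt.trans (hv : CenteredAt b a k v i) (hvw : OccursAt v w p) :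
    CenteredAt b a k w (p + i) := by
  obtain ⟨q, rfl, hq⟩ := hv
  exact ⟨p + q, Nat.add_assoc .., hq.trans hvw⟩

lemma centeredAt_append_singleton_append (hab : a ≤ b) (hv : Bword b a k <:+ v)
    (hw : Bword b a k <+: w) : CenteredAt b a k (v ++ [1] ++ w) v.length := by
  obtain ⟨s, rfl⟩ := hv
  obtain ⟨t, rfl⟩ := hw
  refine ⟨s.length, by rw [List.length_append, length_Bword hab], ?_⟩
  simpa [centerWord] using occursAt_append s (centerWord b a k) t

lemma Bword_prefix_succ (ha : 0 < a) (hb : 0 < b) (k : ℕ) : Bword b a k <+: Bword b a (k + 1) := by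
  rw [Bword, List.append_assoc]
  exact (prefix_wordPow _ (Nat.mul_pos ha (Nat.pow_pos hb))).trans (List.prefix_append _ _)

lemma Bword_suffix_succ (hab : a < b) (k : ℕ) : Bword b a k <:+ Bword b a (k + 1) := by
  rw [Bword]
  exact (suffix_wordPow _ (Nat.mul_pos (Nat.sub_pos_of_lt hab)
    (Nat.pow_pos (Nat.zero_lt_of_lt hab)))).trans (List.suffix_append _ _)

lemma centeredAt_Bword_succ (ha : 0 < a) (hab : a < b) (k : ℕ) :
    CenteredAt b a k (Bword b a (k + 1)) (leftLength b a k) := by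
  have hpow : 0 < b ^ k := Nat.pow_pos (ha.trans hab)
  have := centeredAt_append_singleton_append hab.le
    (suffix_wordPow (Bword b a k) (Nat.mul_pos ha hpow))
    (prefix_wordPow (Bword b a k) (Nat.mul_pos (Nat.sub_pos_of_lt hab) hpow))
  rwa [length_wordPow, length_Bword hab.le] at this

lemma centeredAt_centerWord_succ (ha : 0 < a) (hab : a < b) (k : ℕ) :
    CenteredAt b a k (centerWord b a (k + 1)) (leftLength b a k) ∧
    CenteredAt b a k (centerWord b a (k + 1)) (hseq b (k + 1)) ∧
    CenteredAt b a k (centerWord b a (k + 1)) (hseq b (k + 1) + 1 + leftLength b a k) := by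
  have hspacer := centeredAt_Bword_succ ha hab k
  refine ⟨?_, ?_, ?_⟩
  · rw [← Nat.zero_add (leftLength b a k)]
    exact hspacer.trans (occursAt_of_isPrefix ((List.prefix_append _ _).trans
      (List.prefix_append _ _)))
  · rw [← length_Bword hab.le]
    exact centeredAt_append_singleton_append hab.le (Bword_suffix_succ hab k)
      (Bword_prefix_succ ha (ha.trans hab) k)
  · have := hspacer.trans (occursAt_of_isSuffix (w := Bword b a (k + 1))
      (v := centerWord b a (k + 1)) (List.suffix_append _ _))
    simpa [centerWord, length_Bword hab.le] using this

lemma length_centerWord (hab : a ≤ b) (k : ℕ) :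
    (centerWord b a k).length = 2 * hseq b k + 1 := by
  simp only [centerWord, List.length_append, List.length_singleton, length_Bword hab]
  omega

lemma lt_mark_of_centeredAt (ha : 0 < a) (hab : a < b) {n : ℕ}
    (h : CenteredAt b a k (Bword b a n) i) :
    ∃ c, k < c ∧ (markedWord b a n)[i]? = some c := by
  induction k generalizing i with
  | zero =>
    obtain ⟨p, rfl, hp⟩ := h
    have := (occursAt_iff_getElem?.1 hp).2 1 (by simp [centerWord, Bword])
    simp only [centerWord, Bword, Bword_eq_map_markedWord, List.getElem?_map] at this
    obtain ⟨c, hc, hmin⟩ := Option.map_eq_some_iff.1 this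
    exact ⟨c, by omega, hc⟩
  | succ k ih =>
    obtain ⟨p, rfl, hp⟩ := h
    obtain ⟨hleft, hmid, hright⟩ := centeredAt_centerWord_succ ha hab k
    obtain ⟨c, hkc, hc⟩ := ih (hleft.trans hp)
    obtain ⟨d, hkd, hd⟩ := ih (hmid.trans hp)
    obtain ⟨e, hke, he⟩ := ih (hright.trans hp)
    exact ⟨d, succ_lt_mark_of_marks ha hab hc hd he hkc hkd hke, hd⟩

lemma add_pow_mul_hseq_lt_of_centeredAt (ha : 0 < a) (hab : a < b) {n j : ℕ} (hij : i < j)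
    (hi : CenteredAt b a k (Bword b a n) i) (hj : CenteredAt b a k (Bword b a n) j) :
    i + b ^ k * hseq b k < j := by
  obtain ⟨c, hkc, hc⟩ := lt_mark_of_centeredAt ha hab hi
  obtain ⟨d, hkd, hd⟩ := lt_mark_of_centeredAt ha hab hj
  exact add_pow_mul_hseq_lt_of_marks ha hab hij hc hd hkc hkd

end Centers

/-- The word `w` begins and ends with `B (k+1)`, and each of its blocks of length `h (k+1)`
contains the center of an occurrence of `B k 1 B k` in `w`. The first two clauses make this
property survive concatenation. -/
structure Covered (b a k : ℕ) (w : List ℕ) : Prop where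
  isPrefix : Bword b a (k + 1) <+: w
  isSuffix : Bword b a (k + 1) <:+ w
  exists_centeredAt : ∀ p, p + hseq b (k + 1) ≤ w.length →
    ∃ i, p ≤ i ∧ i < p + hseq b (k + 1) ∧ CenteredAt b a k w i

section Covering

variable {b a k : ℕ} {v w : List ℕ}

lemma covered_Bword_succ (ha : 0 < a) (hab : a < b) (k : ℕ) :
    Covered b a k (Bword b a (k + 1)) where
  isPrefix := List.prefix_rfl
  isSuffix := List.suffix_rfl
  exists_centeredAt p hp := by
    rw [length_Bword hab.le] at hp
    have := hseq_succ_eq hab.le k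
    exact ⟨leftLength b a k, by omega, by omega, centeredAt_Bword_succ ha hab k⟩

lemma Covered.append (ha : 0 < a) (hab : a < b) (hv : Covered b a k v) (hw : Covered b a k w) :
    Covered b a k (v ++ w) where
  isPrefix := hv.isPrefix.trans (List.prefix_append _ _)
  isSuffix := hw.isSuffix.trans (List.suffix_append _ _)
  exists_centeredAt p hp := by
    have hv_occ : OccursAt v (v ++ w) 0 := occursAt_of_isPrefix (List.prefix_append v w)
    have hw_occ : OccursAt w (v ++ w) v.length := by simpa using occursAt_append v w []
    have hcenter := centeredAt_Bword_succ ha hab k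
    have hlast := (hcenter.trans (occursAt_of_isSuffix hv.isSuffix)).trans hv_occ
    have hfirst := (hcenter.trans (occursAt_of_isPrefix hw.isPrefix)).trans hw_occ
    have hlen := hv.isSuffix.length_le
    have hheight := hseq_succ_eq hab.le k
    rw [length_Bword hab.le] at hlast hlen
    rw [List.length_append] at hp
    rcases le_or_gt (p + hseq b (k + 1)) v.length with hpv | hpv
    · obtain ⟨i, hpi, hip, hi⟩ := hv.exists_centeredAt p hpv
      exact ⟨i, hpi, hip, Nat.zero_add i ▸ hi.trans hv_occ⟩
    rcases le_or_gt v.length p with hvp | hvp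
    · obtain ⟨q, rfl⟩ := Nat.exists_eq_add_of_le hvp
      obtain ⟨i, hqi, hiq, hi⟩ := hw.exists_centeredAt q (by omega)
      exact ⟨v.length + i, by omega, by omega, hi.trans hw_occ⟩
    rcases le_or_gt p (v.length - hseq b (k + 1) + leftLength b a k) with hpl | hpl
    · exact ⟨_, by omega, by omega, hlast⟩
    · exact ⟨_, by omega, by omega, hfirst⟩

lemma Covered.append_singleton_append (ha : 0 < a) (hab : a < b) (hv : Covered b a k v)
    (hw : Covered b a k w) : Covered b a k (v ++ [1] ++ w) where
  isPrefix := (hv.isPrefix.trans (List.prefix_append _ _)).trans (List.prefix_append _ _)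
  isSuffix := hw.isSuffix.trans (List.suffix_append _ _)
  exists_centeredAt p hp := by
    have hv_occ : OccursAt v (v ++ [1] ++ w) 0 :=
      occursAt_of_isPrefix ((List.prefix_append _ _).trans (List.prefix_append _ _))
    have hw_occ : OccursAt w (v ++ [1] ++ w) (v.length + 1) := by
      have := occursAt_append (v ++ [1]) w []
      rwa [List.append_nil, List.length_append] at this
    simp only [List.length_append, List.length_singleton] at hp
    rcases le_or_gt (p + hseq b (k + 1)) v.length with hpv | hpv
    · obtain ⟨i, hpi, hip, hi⟩ := hv.exists_centeredAt p hpv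
      exact ⟨i, hpi, hip, Nat.zero_add i ▸ hi.trans hv_occ⟩
    rcases le_or_gt p v.length with hvp | hvp
    · exact ⟨v.length, hvp, hpv, centeredAt_append_singleton_append hab.le
        ((Bword_suffix_succ hab k).trans hv.isSuffix)
        ((Bword_prefix_succ ha (ha.trans hab) k).trans hw.isPrefix)⟩
    · obtain ⟨q, rfl⟩ := Nat.exists_eq_add_of_le (Nat.succ_le_of_lt hvp)
      obtain ⟨i, hqi, hiq, hi⟩ := hw.exists_centeredAt q (by omega)
      exact ⟨v.length + 1 + i, by omega, by omega, hi.trans hw_occ⟩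

lemma covered_Bword (ha : 0 < a) (hab : a < b) {n : ℕ} (hn : k < n) :
    Covered b a k (Bword b a n) := by
  induction n, hn using Nat.le_induction with
  | base => exact covered_Bword_succ ha hab k
  | succ n _ ih =>
    have hpow : 0 < b ^ n := Nat.pow_pos (ha.trans hab)
    have hcovered {m : ℕ} (hm : 0 < m) :=
      wordPow_induction (fun _ _ ↦ Covered.append ha hab) ih hm
    exact (hcovered (Nat.mul_pos ha hpow)).append_singleton_append ha hab
      (hcovered (Nat.mul_pos (Nat.sub_pos_of_lt hab) hpow))

end Covering

section Subshift

variable {b a k : ℕ} {x : ℤ → ℕ}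

lemma iterate_shiftMap_apply (n : ℕ) (x : ℤ → ℕ) (i : ℤ) : shiftMap^[n] x i = x (i + n) := by
  induction n generalizing x with
  | zero => simp
  | succ n ih =>
    rw [Function.iterate_succ_apply, ih, shiftMap, Nat.cast_succ, add_assoc]

lemma blockEq_iterate_shiftMap_iff {n : ℕ} {m : ℤ} {w : List ℕ} :
    BlockEq (shiftMap^[n] x) m w ↔ BlockEq x (m + n) w := by
  simp only [BlockEq, iterate_shiftMap_apply, add_right_comm]

lemma inX_iterate_shiftMap_iff {n : ℕ} : InX b a (shiftMap^[n] x) ↔ InX b a x := by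
  simp only [InX, iterate_shiftMap_apply, add_right_comm _ _ (n : ℤ)]
  exact (Equiv.addRight (n : ℤ)).forall_congr fun _ ↦ Iff.rfl

lemma iterate_shiftMap_mem_Sset_iff {n : ℕ} :
    shiftMap^[n] x ∈ Sset b a k ↔ InX b a x ∧ BlockEq x (-hseq b k + n) (centerWord b a k) :=
  and_congr inX_iterate_shiftMap_iff blockEq_iterate_shiftMap_iff

lemma InX.exists_blockEq_iff_occursAt (hx : InX b a x) (m : ℤ) (l : ℕ) :
    ∃ n q, q + l ≤ (Bword b a n).length ∧ ∀ (p : ℕ) (u : List ℕ), p + u.length ≤ l →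
      (BlockEq x (m + p) u ↔ OccursAt u (Bword b a n) (q + p)) := by
  obtain ⟨n, q, hocc⟩ := hx m l
  obtain ⟨hlen, hletter⟩ := occursAt_iff_getElem?.1 hocc
  rw [List.length_ofFn] at hlen hletter
  refine ⟨n, q, hlen, fun p u hpu ↦ ?_⟩
  rw [occursAt_iff_getElem?, and_iff_right (by omega)]
  refine forall₂_congr fun i hi ↦ ?_
  rw [add_assoc q, hletter (p + i) (by omega), List.getElem?_ofFn, dif_pos (by omega),
    List.getElem?_eq_getElem hi, List.getD_eq_getElem _ _ hi, Nat.cast_add, add_assoc,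
    Option.some.injEq]

lemma InX.exists_mem_Sset_iff_centeredAt (hab : a ≤ b) (hx : InX b a x) (k N : ℕ) :
    ∃ n q, q + N ≤ hseq b n ∧
      ∀ i < N, (shiftMap^[i] x ∈ Sset b a k ↔ CenteredAt b a k (Bword b a n) (q + i)) := by
  obtain ⟨n, q, hlen, hwindow⟩ := hx.exists_blockEq_iff_occursAt (-hseq b k) (N + 2 * hseq b k)
  rw [length_Bword hab] at hlen
  refine ⟨n, q + hseq b k, by omega, fun i hi ↦ ?_⟩
  rw [iterate_shiftMap_mem_Sset_iff, and_iff_right hx,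
    hwindow i _ (by rw [length_centerWord hab]; omega)]
  refine ⟨fun h ↦ ⟨q + i, add_right_comm .., h⟩, fun ⟨p, hp, h⟩ ↦ ?_⟩
  rwa [show q + i = p by omega]

lemma pow_mul_hseq_lt_of_iterate_mem_Sset (ha : 0 < a) (hab : a < b) {m : ℕ} (hm : 0 < m)
    (hx : x ∈ Sset b a k) (hxm : shiftMap^[m] x ∈ Sset b a k) : b ^ k * hseq b k < m := by
  obtain ⟨n, q, -, hiff⟩ := hx.1.exists_mem_Sset_iff_centeredAt hab.le k (m + 1)
  have := add_pow_mul_hseq_lt_of_centeredAt ha hab (by omega)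
    ((hiff 0 (by omega)).1 hx) ((hiff m (by omega)).1 hxm)
  omega

lemma InX.exists_iterate_mem_Sset (ha : 0 < a) (hab : a < b) (hx : InX b a x) (k : ℕ) :
    ∃ n < hseq b (k + 1), shiftMap^[n] x ∈ Sset b a k := by
  obtain ⟨n, q, hlen, hiff⟩ := hx.exists_mem_Sset_iff_centeredAt hab.le k (hseq b (k + 1))
  have hkn : k + 1 ≤ n := (hseq_strictMono (ha.trans hab)).le_iff_le.1 (by omega)
  obtain ⟨i, hqi, hiq, hi⟩ := (covered_Bword ha hab hkn).exists_centeredAt q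
    (by rwa [length_Bword hab.le])
  obtain ⟨j, rfl⟩ := Nat.exists_eq_add_of_le hqi
  exact ⟨j, by omega, (hiff j (by omega)).2 hi⟩

lemma mem_Sset_of_mem_Sset_succ (ha : 0 < a) (hab : a < b) (hx : x ∈ Sset b a (k + 1)) :
    x ∈ Sset b a k ∧ shiftMap^[leftLength b a k + 1] x ∈ Sset b a k := by
  obtain ⟨-, ⟨p, hp, hmid⟩, q, hq, hright⟩ := centeredAt_centerWord_succ ha hab k
  have hcenter : (-hseq b k : ℤ) = -hseq b (k + 1) + p := by omega
  have hnext : (-hseq b k : ℤ) + (leftLength b a k + 1 : ℕ) = -hseq b (k + 1) + q := by omega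
  refine ⟨⟨hx.1, hcenter ▸ hx.2.of_occursAt hmid⟩, iterate_shiftMap_mem_Sset_iff.2 ⟨hx.1, ?_⟩⟩
  exact hnext ▸ hx.2.of_occursAt hright

end Subshift

section Measure

variable {b a : ℕ} {μ : Measure (ℤ → ℕ)}

lemma measurableSet_blockEq (m : ℤ) (w : List ℕ) : MeasurableSet {x | BlockEq x m w} := by
  simp only [BlockEq, Set.ofPred_forall]
  exact .iInter fun i ↦ .iInter fun _ ↦ measurable_pi_apply (m + i) (measurableSet_singleton _)

lemma nullMeasurableSet_Sset (hX : ∀ᵐ x ∂μ, InX b a x) (k : ℕ) :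
    NullMeasurableSet (Sset b a k) μ := by
  refine (measurableSet_blockEq (-hseq b k) (centerWord b a k)).nullMeasurableSet.congr ?_
  filter_upwards [hX] with x hx
  exact propext (and_iff_right hx).symm

lemma measure_Sset_ne_zero (ha : 0 < a) (hab : a < b) [NeZero μ] (hX : ∀ᵐ x ∂μ, InX b a x)
    (hinv : MeasurePreserving shiftMap μ μ) (k : ℕ) : μ (Sset b a k) ≠ 0 := by
  refine measure_ne_zero_of_ae_exists_iterate_mem hinv.quasiMeasurePreserving ?_
  filter_upwards [hX] with x hx
  exact (hx.exists_iterate_mem_Sset ha hab k).imp fun _ ↦ And.right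

lemma one_div_hseq_lt_measure_Sset (ha : 0 < a) (hab : a < b) [IsProbabilityMeasure μ]
    (hX : ∀ᵐ x ∂μ, InX b a x) (hinv : MeasurePreserving shiftMap μ μ) (k : ℕ) :
    1 / (hseq b (k + 1) : ℝ≥0∞) < μ (Sset b a k) := by
  have hvisit : ∀ᵐ x ∂μ, ∃ n < hseq b (k + 1), shiftMap^[n] x ∈ Sset b a k := by
    filter_upwards [hX] with x hx
    exact hx.exists_iterate_mem_Sset ha hab k
  have htwice : μ (Sset b a k ∩ shiftMap^[leftLength b a k + 1] ⁻¹' Sset b a k) ≠ 0 := fun h ↦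
    measure_Sset_ne_zero ha hab hX hinv (k + 1)
      (measure_mono_null (fun _ ↦ mem_Sset_of_mem_Sset_succ ha hab) h)
  have hlt : leftLength b a k + 1 < hseq b (k + 1) := by
    rw [hseq_succ_eq hab.le]
    exact Nat.lt_add_of_pos_right (rightLength_pos hab k)
  rw [ENNReal.div_lt_iff (.inl (Nat.cast_ne_zero.2 (hseq_pos b _).ne')) (.inl (by simp)),
    mul_comm, ← measure_univ (μ := μ)]
  exact measure_univ_lt_mul_measure_of_ae_exists_iterate_mem hinv (nullMeasurableSet_Sset hX k)
    hvisit (Nat.succ_pos _) hlt htwice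

lemma measure_Sset_lt_div_hseq (ha : 0 < a) (hab : a < b) [IsProbabilityMeasure μ]
    (hX : ∀ᵐ x ∂μ, InX b a x) (hinv : MeasurePreserving shiftMap μ μ) (k : ℕ) :
    μ (Sset b a k) < (b : ℝ≥0∞) / (hseq b (k + 1) : ℝ≥0∞) := by
  have hreturn : ((b ^ k * hseq b k + 1 : ℕ) : ℝ≥0∞) * μ (Sset b a k) ≤ 1 := by
    rw [← measure_univ (μ := μ)]
    exact mul_measure_le_of_forall_iterate_mem_le hinv (nullMeasurableSet_Sset hX k)
      fun _ hx _ hm hxm ↦ pow_mul_hseq_lt_of_iterate_mem_Sset ha hab hm hx hxm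
  have hheight : hseq b (k + 1) < b * (b ^ k * hseq b k + 1) := by
    rw [hseq, pow_succ', mul_add, mul_one, mul_assoc]
    exact Nat.add_lt_add_left (Nat.lt_of_le_of_lt ha hab) _
  rw [ENNReal.lt_div_iff_mul_lt (.inl (Nat.cast_ne_zero.2 (hseq_pos b _).ne')) (.inl (by simp))]
  calc μ (Sset b a k) * hseq b (k + 1)
      < μ (Sset b a k) * (b * (b ^ k * hseq b k + 1) : ℕ) :=
        ENNReal.mul_lt_mul_right (measure_Sset_ne_zero ha hab hX hinv k) (measure_ne_top _ _)
          (Nat.cast_lt.2 hheight)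
    _ = b * ((b ^ k * hseq b k + 1 : ℕ) * μ (Sset b a k)) := by
        rw [Nat.cast_mul, mul_comm, mul_assoc]
    _ ≤ b := mul_le_of_le_one_right' hreturn

end Measure

/-- for any invariant Borel probability measure `μ` on `X`,
`1 / h (k+1) < μ (S k) < b / h (k+1)`. -/
theorem measure_Sset_bounds (b a : ℕ) (hb : 2 ≤ b) (ha1 : 1 ≤ a) (ha2 : a ≤ b - 1)
    (μ : Measure (ℤ → ℕ)) (hprob : IsProbabilityMeasure μ)
    (hsupp : μ {y | InX b a y}ᶜ = 0) (hinv : MeasurePreserving shiftMap μ μ) (k : ℕ) :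
    1 / (hseq b (k + 1) : ℝ≥0∞) < μ (Sset b a k) ∧
      μ (Sset b a k) < (b : ℝ≥0∞) / (hseq b (k + 1) : ℝ≥0∞) := by
  have hab : a < b := by omega
  have hX : ∀ᵐ x ∂μ, InX b a x := hsupp
  exact ⟨one_div_hseq_lt_measure_Sset ha1 hab hX hinv k,
    measure_Sset_lt_div_hseq ha1 hab hX hinv k⟩
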